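/- Let M = P + εD ∈ 𝔻ℍ[t] be a bounded monic reduced motion polynomial of degree n ≥ 1 with P, D ∈ ℍ[t]. Set c := mrpf(P) and P = c·Q, and assume deg c > 0 and ν(M) = Nⁿ for some real irreducible quadratic N ∈ ℝ[t]. Let g := mrpf(c, Q*·D) and assume g divides mrpf(c, D·Q*) and c·g divides D·D*. Then there exist monic motion polynomials M_L, M_C, M_R ∈ 𝔻ℍ[t] with M = M_L·M_C·M_R, where M_L and M_R are generic, M_C = c + εD' for some D' ∈ ℍ[t], and M_C is a product of two generic motion polynomials. -/

import Mathlib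

open Polynomial DualNumber TrivSqZeroExt

noncomputable section

/-- The real quaternions. -/
abbrev Hq : Type := Quaternion ℝ

/-- The dual quaternions. -/
abbrev DHq : Type := DualNumber Hq

/-- Conjugation of a dual quaternion: `(p + ε d)* = p* + ε d*`. -/
instance : Star DHq := ⟨fun x => inl (star x.fst) + inr (star x.snd)⟩

/-- Coefficient-wise (quaternion) conjugation of a polynomial. -/
def cstar {R : Type*} [Semiring R] [Star R] (A : R[X]) : R[X] :=
  A.sum fun n a => Polynomial.C (star a) * Polynomial.X ^ n

/-- The embedding `ℝ[t] → ℍ[t]`. -/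
def qPoly (f : ℝ[X]) : Hq[X] := f.map (algebraMap ℝ Hq)

/-- The embedding `ℍ[t] → 𝔻ℍ[t]` (primal part). -/
def dhQ (P : Hq[X]) : DHq[X] := P.map (inlHom Hq Hq)

/-- The embedding `ℝ[t] → 𝔻ℍ[t]`. -/
def dPoly (f : ℝ[X]) : DHq[X] := dhQ (qPoly f)

/-- The dual quaternion polynomial `P + ε D` with primal part `P` and dual part `D`. -/
def mp (P D : Hq[X]) : DHq[X] := dhQ P + Polynomial.C ε * dhQ D

/-- The primal part of a dual quaternion polynomial. -/
def primal (A : DHq[X]) : Hq[X] := A.map (fstHom ℝ Hq Hq).toRingHom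

/-- A motion polynomial: a dual quaternion polynomial whose norm polynomial
`ν(M) = M·M*` is a nonzero real polynomial. -/
def IsMotion (M : DHq[X]) : Prop := ∃ f : ℝ[X], f ≠ 0 ∧ M * cstar M = dPoly f

/-- A real polynomial divides a quaternion polynomial. -/
def RDvdQ (f : ℝ[X]) (A : Hq[X]) : Prop := ∃ B : Hq[X], A = qPoly f * B

/-- A real polynomial divides a dual quaternion polynomial. -/
def RDvdD (f : ℝ[X]) (A : DHq[X]) : Prop := ∃ B : DHq[X], A = dPoly f * B

/-- `g` is the greatest common monic real polynomial divisor of a quaternion polynomial `A`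
(with itself), i.e. `g = mrpf A`. -/
def IsMrpfQ (g : ℝ[X]) (A : Hq[X]) : Prop :=
  g.Monic ∧ RDvdQ g A ∧ ∀ f : ℝ[X], f.Monic → RDvdQ f A → f ∣ g

/-- `g` is the greatest common monic real polynomial divisor of `c ∈ ℝ[t]` and a quaternion
polynomial `A`, i.e. `g = mrpf(c, A)`. -/
def IsMrpf2 (g : ℝ[X]) (c : ℝ[X]) (A : Hq[X]) : Prop :=
  g.Monic ∧ g ∣ c ∧ RDvdQ g A ∧
    ∀ f : ℝ[X], f.Monic → f ∣ c → RDvdQ f A → f ∣ g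

/-- `g` is the greatest common monic real polynomial divisor of `c ∈ ℝ[t]` and two quaternion
polynomials `A` and `B`, i.e. `g = mrpf(c, A, B)`. -/
def IsMrpf3 (g : ℝ[X]) (c : ℝ[X]) (A B : Hq[X]) : Prop :=
  g.Monic ∧ g ∣ c ∧ RDvdQ g A ∧ RDvdQ g B ∧
    ∀ f : ℝ[X], f.Monic → f ∣ c → RDvdQ f A → RDvdQ f B → f ∣ g

/-- A quaternion polynomial is reduced: `mrpf = 1`, i.e. it has only constant real
polynomial factors. -/
def ReducedQ (A : Hq[X]) : Prop := ∀ f : ℝ[X], f.Monic → RDvdQ f A → f = 1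

/-- A dual quaternion polynomial is reduced: `mrpf = 1`. -/
def ReducedD (A : DHq[X]) : Prop := ∀ f : ℝ[X], f.Monic → RDvdD f A → f = 1

/-- Boundedness of a (monic reduced) motion polynomial: `mrpf` of its primal part has
no real root, equivalently no linear real polynomial `t - a` divides the primal part. -/
def BoundedD (M : DHq[X]) : Prop :=
  ∀ a : ℝ, ¬ RDvdQ (Polynomial.X - Polynomial.C a) (primal M)

/-- A generic motion polynomial: monic, a motion polynomial, with `mrpf` of the primal
part equal to `1`. -/
def GenericD (M : DHq[X]) : Prop :=
  M.Monic ∧ IsMotion M ∧ ReducedQ (primal M)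

/-- The monic linear dual quaternion polynomial `t - p - ε d`. -/
def lin (p d : Hq) : DHq[X] := mp (Polynomial.X - Polynomial.C p) (-Polynomial.C d)

/-- `M` admits a factorization into monic linear motion polynomial factors. -/
def HasLinFact (M : DHq[X]) : Prop :=
  ∃ L : List DHq, (∀ h ∈ L, IsMotion (Polynomial.X - Polynomial.C h)) ∧
    M = (L.map fun h => Polynomial.X - Polynomial.C h).prod

end

/-!
Write `M = c Q + ε D` with `c = N ^ k` and `g = N ^ j`. Suppose first that `N g` does not divide
`Q* D`. As `N` does not divide `D`, the left greatest common divisor `L` of `D` and `c g` has norm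
`c g`, and `M = L (K + ε E)` with `N` dividing neither `L` nor `K`. Motion polynomials of norm
`N ^ n` whose primal part is not divisible by `N` split off linear factors on both sides, and as
`N` is irreducible, `c ∣ L K` forces the last `k` linear factors of `L` and the first `k` of `K` to
cancel pairwise to `N`. These `2 k` factors form the middle part.

If `N g ∣ Q* D`, then `g = c` by maximality of `g`. In this case one first conjugates by a
translation `1 + ε y`, which replaces `D` by `D + c (y Q - Q y)`. This preserves all hypotheses
(here `g ∣ D Q*` enters), and because the trace form on quaternions is nondegenerate, `y` can be
chosen such that `N` does not divide `Q* y Q`, so that `N c` no longer divides `Q* D`.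
-/

/-! ### Coefficientwise conjugation -/

theorem dvd_mul_of_commute {M : Type*} [Semigroup M] {a b c : M} (hab : Commute a b)
    (h : a ∣ c) : a ∣ b * c := by
  obtain ⟨d, rfl⟩ := h
  exact ⟨b * d, hab.symm.left_comm d⟩

theorem commute_map_of_commute {R S : Type*} [Semiring R] [Semiring S] {φ : R →+* S}
    (hφ : ∀ a b, Commute (φ a) b) (f : R[X]) (A : S[X]) : Commute (f.map φ) A := by
  ext n
  rw [coeff_mul, coeff_mul, ← Finset.Nat.sum_antidiagonal_swap]
  simp only [Prod.fst_swap, Prod.snd_swap, coeff_map, (hφ _ _).eq]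

section Cstar

variable {R S : Type*} [Semiring R] [StarRing R] [Semiring S] [StarRing S]

theorem coeff_cstar (A : R[X]) (n : ℕ) : (cstar A).coeff n = star (A.coeff n) := by
  simp only [cstar, Polynomial.sum_def, finsetSum_coeff, coeff_C_mul, coeff_X_pow, mul_ite,
    mul_one, mul_zero, Finset.sum_ite_eq]
  split_ifs with h
  · rfl
  · rw [notMem_support_iff.mp h, star_zero]

theorem cstar_cstar (A : R[X]) : cstar (cstar A) = A := by
  ext n; simp [coeff_cstar]

theorem cstar_add (A B : R[X]) : cstar (A + B) = cstar A + cstar B := by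
  ext n; simp [coeff_cstar]

theorem cstar_mul (A B : R[X]) : cstar (A * B) = cstar B * cstar A := by
  ext n
  rw [coeff_cstar, coeff_mul, coeff_mul, star_sum, ← Finset.Nat.sum_antidiagonal_swap]
  simp [coeff_cstar]

theorem cstar_C (a : R) : cstar (C a) = C (star a) := by
  ext n; simp only [coeff_cstar, coeff_C]; split_ifs <;> simp

theorem cstar_one : cstar (1 : R[X]) = 1 := by
  rw [← C_1, cstar_C, star_one]

theorem cstar_map {φ : R →+* S} (hφ : ∀ a, φ (star a) = star (φ a)) (A : R[X]) :
    cstar (A.map φ) = (cstar A).map φ := by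
  ext n; simp [coeff_cstar, hφ]

theorem natDegree_cstar (A : R[X]) : (cstar A).natDegree = A.natDegree := by
  have h (B : R[X]) : (cstar B).natDegree ≤ B.natDegree :=
    natDegree_le_iff_coeff_eq_zero.mpr fun n hn => by
      rw [coeff_cstar, coeff_eq_zero_of_natDegree_lt hn, star_zero]
  exact (h A).antisymm (by simpa only [cstar_cstar] using h (cstar A))

theorem monic_cstar {A : R[X]} (hA : A.Monic) : (cstar A).Monic := by
  rw [Monic, leadingCoeff, natDegree_cstar, coeff_cstar, coeff_natDegree, hA, star_one]

end Cstar

section Norm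

variable {R : Type*} [Ring R] [StarRing R]

theorem cstar_sub (A B : R[X]) : cstar (A - B) = cstar A - cstar B := by
  ext n; simp [coeff_cstar]

theorem cstar_mul_self_of_mul_cstar {A f : R[X]} (hA : A.Monic) (hf : Commute f A)
    (h : A * cstar A = f) : cstar A * A = f :=
  hA.isRegular.left <| show A * (cstar A * A) = A * f by rw [← mul_assoc, h, hf.eq]

theorem mul_cstar_of_mul_mul_cstar {A B f : R[X]} (hA : A.Monic) (hf : Commute f (cstar A))
    (h : A * B * cstar (A * B) = A * cstar A * f) : B * cstar B = f := by
  refine hA.isRegular.left ((monic_cstar hA).isRegular.right ?_)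
  calc A * (B * cstar B) * cstar A = A * B * cstar (A * B) := by
        rw [cstar_mul]; simp only [mul_assoc]
    _ = A * f * cstar A := by rw [h, mul_assoc, ← hf.eq, ← mul_assoc]

theorem dvd_cstar_mul_self_modByMonic {N Y : R[X]} (hN : ∀ A, Commute N A) (hstar : cstar N = N)
    (h : N ∣ cstar Y * Y) : N ∣ cstar (Y %ₘ N) * (Y %ₘ N) := by
  have hrem : Y %ₘ N = Y - N * (Y /ₘ N) := eq_sub_of_add_eq (modByMonic_add_div Y N)
  have hcstar : cstar (N * (Y /ₘ N)) = N * cstar (Y /ₘ N) := by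
    rw [cstar_mul, hstar, (hN _).eq]
  rw [hrem, cstar_sub, hcstar, sub_mul, mul_sub]
  exact dvd_sub (dvd_sub h (dvd_mul_of_commute (hN _) (dvd_mul_right _ _)))
    ((dvd_mul_right _ _).mul_right _)

theorem X_sub_C_mul_cstar_eq_of_dvd {N : R[X]} (hN : N.Monic) (hdeg : N.natDegree = 2)
    (hcomm : ∀ A, Commute N A) {h : R} (hdvd : N ∣ cstar (X - C h) * (X - C h)) :
    (X - C h) * cstar (X - C h) = N := by
  nontriviality R
  have hmonic : (X - C h).Monic := monic_X_sub_C h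
  have hnorm : cstar (X - C h) * (X - C h) = N :=
    eq_of_monic_of_dvd_of_natDegree_le hN ((monic_cstar hmonic).mul hmonic) hdvd <| by
      rw [(monic_cstar hmonic).natDegree_mul hmonic, natDegree_cstar, natDegree_X_sub_C, hdeg]
  refine hmonic.isRegular.right ?_
  change (X - C h) * cstar (X - C h) * (X - C h) = N * (X - C h)
  rw [mul_assoc, hnorm, (hcomm _).eq]

/- The remainder of `Y` modulo `N` has the form `(t - h) u` with `u` invertible, and its zero `h`
gives a left factor of both `N` and `Y`. -/
theorem exists_eq_X_sub_C_mul {N Y : R[X]} (hN : N.Monic) (hdeg : N.natDegree = 2)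
    (hcomm : ∀ A, Commute N A) (hstar : cstar N = N) (hunit : IsUnit ((Y %ₘ N).coeff 1))
    (hdvd : N ∣ cstar Y * Y) :
    ∃ h Z, Y = (X - C h) * Z ∧ (X - C h) * cstar (X - C h) = N := by
  obtain ⟨u, hu⟩ := hunit
  let v : R := ↑u⁻¹
  have huv : (u : R) * v = 1 := u.mul_inv
  have hvu : v * (u : R) = 1 := u.inv_mul
  let h : R := -((Y %ₘ N).coeff 0 * v)
  have hrem : Y %ₘ N = (X - C h) * C (u : R) := by
    have hlt := natDegree_modByMonic_lt Y hN (by rintro rfl; simp at hdeg)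
    have hlin := eq_X_add_C_of_natDegree_le_one (p := Y %ₘ N) (by omega)
    rw [← hu, ← X_mul_C] at hlin
    rw [sub_mul, ← C_mul, neg_mul, mul_assoc, hvu, mul_one, C_neg, sub_neg_eq_add, ← hlin]
  have hrem' : X - C h = (Y %ₘ N) * C v := by
    rw [hrem, mul_assoc, ← C_mul, huv, C_1, mul_one]
  have hlin : (X - C h) * cstar (X - C h) = N := by
    refine X_sub_C_mul_cstar_eq_of_dvd hN hdeg hcomm ?_
    rw [hrem', cstar_mul, mul_assoc, ← mul_assoc (cstar (Y %ₘ N))]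
    exact dvd_mul_of_commute (hcomm _)
      ((dvd_cstar_mul_self_modByMonic hcomm hstar hdvd).mul_right _)
  refine ⟨h, cstar (X - C h) * (Y /ₘ N) + C (u : R), ?_, hlin⟩
  rw [mul_add, ← mul_assoc, hlin, ← hrem, add_comm, modByMonic_add_div]

end Norm

/-! ### Left greatest common divisors -/

theorem exists_monic_left_gcd {K : Type*} [DivisionRing K] (A B : K[X]) (hB : B.Monic) :
    ∃ L U V : K[X], L.Monic ∧ L = A * U + B * V ∧ L ∣ A ∧ L ∣ B := by
  induction hn : B.natDegree using Nat.strong_induction_on generalizing A B with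
  | _ n ih =>
    subst hn
    have hdiv : A %ₘ B + B * (A /ₘ B) = A := modByMonic_add_div A B
    by_cases hR : A %ₘ B = 0
    · exact ⟨B, 0, 1, hB, by simp, ⟨A /ₘ B, by simpa [hR] using hdiv.symm⟩, dvd_rfl⟩
    have hlead : (A %ₘ B).leadingCoeff ≠ 0 := leadingCoeff_ne_zero.mpr hR
    have hlt : (A %ₘ B).natDegree < B.natDegree :=
      natDegree_modByMonic_lt A hB (by rintro rfl; simp at hR)
    obtain ⟨L, U, V, hL, hcomb, hLB, hLR⟩ := ih _
      (by rwa [natDegree_mul_leadingCoeff_inv _ hR]) B _ (monic_mul_leadingCoeff_inv hR) rfl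
    have hLR' : L ∣ A %ₘ B := by
      simpa [mul_assoc, ← C_mul, hlead] using hLR.mul_right (C (A %ₘ B).leadingCoeff)
    refine ⟨L, C (A %ₘ B).leadingCoeff⁻¹ * V, U - A /ₘ B * (C (A %ₘ B).leadingCoeff⁻¹ * V), hL,
      ?_, hdiv ▸ dvd_add hLR' (hLB.mul_right _), hLB⟩
    have hrem : A %ₘ B = A - B * (A /ₘ B) := eq_sub_of_add_eq hdiv
    rw [hcomb]
    generalize C (A %ₘ B).leadingCoeff⁻¹ = u
    rw [hrem]
    noncomm_ring

/-! ### Powers of an irreducible polynomial -/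

theorem eq_one_of_dvd_pow_of_not_dvd {K : Type*} [Field K] {N r : K[X]} (hN : Irreducible N)
    (hr : r.Monic) {i : ℕ} (h : r ∣ N ^ i) (hNr : ¬ N ∣ r) : r = 1 := by
  obtain ⟨e, -, he⟩ := (dvd_prime_pow hN.prime i).mp h
  obtain rfl | he0 := eq_or_ne e 0
  · exact hr.eq_one_of_isUnit (associated_one_iff_isUnit.mp (by simpa using he))
  · exact absurd ((dvd_pow_self N he0).trans he.dvd') hNr

theorem eq_pow_of_monic_of_dvd_pow {K : Type*} [Field K] {N f : K[X]} {n : ℕ} (hN : N.Monic)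
    (hirr : Irreducible N) (hf : f.Monic) (h : f ∣ N ^ n) : ∃ k ≤ n, f = N ^ k := by
  obtain ⟨k, hk, hfk⟩ := (dvd_prime_pow hirr.prime n).mp h
  exact ⟨k, hk, eq_of_monic_of_associated hf (hN.pow k) hfk⟩

theorem exists_monic_pow_eq {K : Type*} [Field K] {N : K[X]} {n : ℕ} (hN : Irreducible N)
    (h : (N ^ n).Monic) :
    ∃ N₀ : K[X], N₀.Monic ∧ Irreducible N₀ ∧ N₀.natDegree = N.natDegree ∧ N₀ ^ n = N ^ n := by
  classical
  refine ⟨normalize N, monic_normalize hN.ne_zero, (associated_normalize N).irreducible hN,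
    natDegree_eq_of_degree_eq degree_normalize, ?_⟩
  exact (map_pow normalizeHom N n).symm.trans h.normalize_eq_self

/-! ### Real divisors of quaternion polynomials -/

theorem qPoly_one : qPoly 1 = 1 := Polynomial.map_one _

theorem qPoly_add (f g : ℝ[X]) : qPoly (f + g) = qPoly f + qPoly g := Polynomial.map_add _

theorem qPoly_mul (f g : ℝ[X]) : qPoly (f * g) = qPoly f * qPoly g := Polynomial.map_mul _

theorem qPoly_injective : Function.Injective qPoly :=
  map_injective _ (algebraMap ℝ Hq).injective

theorem qPoly_ne_zero {f : ℝ[X]} (hf : f ≠ 0) : qPoly f ≠ 0 :=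
  (Polynomial.map_ne_zero_iff (algebraMap ℝ Hq).injective).mpr hf

theorem monic_qPoly {f : ℝ[X]} (hf : f.Monic) : (qPoly f).Monic := hf.map _

theorem natDegree_qPoly (f : ℝ[X]) : (qPoly f).natDegree = f.natDegree :=
  natDegree_map_eq_of_injective (algebraMap ℝ Hq).injective f

theorem commute_qPoly (f : ℝ[X]) (A : Hq[X]) : Commute (qPoly f) A :=
  commute_map_of_commute (fun a b => Algebra.commutes a b) f A

theorem cstar_qPoly (f : ℝ[X]) : cstar (qPoly f) = qPoly f := by
  ext1 n; simp [coeff_cstar, qPoly]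

theorem exists_eq_qPoly_of_cstar_eq {A : Hq[X]} (hA : cstar A = A) : ∃ f, A = qPoly f := by
  have hmem : A ∈ (mapRingHom (algebraMap ℝ Hq)).range :=
    (mem_map_range _).mpr fun n =>
      ⟨(A.coeff n).re, (Quaternion.star_eq_self.mp (by rw [← coeff_cstar, hA])).symm⟩
  obtain ⟨f, rfl⟩ := hmem
  exact ⟨f, rfl⟩

theorem exists_mul_cstar_eq_qPoly (A : Hq[X]) : ∃ f, A * cstar A = qPoly f :=
  exists_eq_qPoly_of_cstar_eq (by rw [cstar_mul, cstar_cstar])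

theorem exists_add_cstar_eq_qPoly (A : Hq[X]) : ∃ f, A + cstar A = qPoly f :=
  exists_eq_qPoly_of_cstar_eq (by rw [cstar_add, cstar_cstar, add_comm])

theorem commute_mul_cstar (A B : Hq[X]) : Commute (A * cstar A) B := by
  obtain ⟨f, hf⟩ := exists_mul_cstar_eq_qPoly A
  exact hf ▸ commute_qPoly f B

theorem commute_add_cstar (A B : Hq[X]) : Commute (A + cstar A) B := by
  obtain ⟨f, hf⟩ := exists_add_cstar_eq_qPoly A
  exact hf ▸ commute_qPoly f B

theorem cstar_mul_self (A : Hq[X]) : cstar A * A = A * cstar A := by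
  obtain rfl | hA := eq_or_ne A 0
  · simp
  · exact mul_left_cancel₀ hA <| by rw [← mul_assoc, (commute_mul_cstar A A).eq]

theorem mul_add_cstar_mul_comm (A B : Hq[X]) :
    A * B + cstar (A * B) = B * A + cstar (B * A) := by
  obtain rfl | hB := eq_or_ne B 0
  · simp [cstar]
  refine mul_right_cancel₀ hB ?_
  calc (A * B + cstar (A * B)) * B = B * (A * B + cstar (A * B)) := commute_add_cstar _ _
    _ = B * A * B + B * cstar B * cstar A := by rw [mul_add, cstar_mul, mul_assoc, mul_assoc]
    _ = (B * A + cstar (B * A)) * B := by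
        rw [(commute_mul_cstar B _).eq, ← cstar_mul_self, cstar_mul, add_mul, mul_assoc (cstar A)]

theorem qPoly_dvd_qPoly_iff {f g : ℝ[X]} : qPoly f ∣ qPoly g ↔ f ∣ g := by
  refine ⟨fun ⟨B, hB⟩ => ?_, fun ⟨h, hh⟩ => ⟨qPoly h, by rw [hh, qPoly_mul]⟩⟩
  obtain rfl | hf := eq_or_ne f 0
  · exact zero_dvd_iff.mpr (qPoly_injective (by simpa [qPoly] using hB))
  obtain ⟨b, rfl⟩ : ∃ b, B = qPoly b := by
    refine exists_eq_qPoly_of_cstar_eq (mul_left_cancel₀ (qPoly_ne_zero hf) ?_)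
    rw [← hB, (commute_qPoly f _).eq, ← cstar_qPoly f, ← cstar_mul, ← hB, cstar_qPoly]
  exact ⟨b, qPoly_injective (by rw [hB, qPoly_mul])⟩

theorem qPoly_dvd_mul_left {f : ℝ[X]} {A : Hq[X]} (h : qPoly f ∣ A) (B : Hq[X]) :
    qPoly f ∣ B * A :=
  dvd_mul_of_commute (commute_qPoly f B) h

theorem qPoly_dvd_cstar_iff {f : ℝ[X]} {A : Hq[X]} : qPoly f ∣ cstar A ↔ qPoly f ∣ A := by
  have h {B : Hq[X]} : qPoly f ∣ B → qPoly f ∣ cstar B := by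
    rintro ⟨Z, rfl⟩
    exact ⟨cstar Z, by rw [cstar_mul, cstar_qPoly, (commute_qPoly f _).eq]⟩
  exact ⟨fun hA => cstar_cstar A ▸ h hA, h⟩

theorem qPoly_mul_dvd_qPoly_mul_iff {f g : ℝ[X]} {A : Hq[X]} (hf : f ≠ 0) :
    qPoly (f * g) ∣ qPoly f * A ↔ qPoly g ∣ A := by
  rw [qPoly_mul, mul_dvd_mul_iff_left (qPoly_ne_zero hf)]

theorem dvd_of_qPoly_dvd_qPoly_mul {N f : ℝ[X]} {A : Hq[X]} (hN : Irreducible N)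
    (hA : ¬ qPoly N ∣ A) (h : qPoly N ∣ qPoly f * A) : N ∣ f := by
  by_contra hf
  obtain ⟨u, v, huv⟩ := hN.coprime_iff_not_dvd.mpr hf
  refine hA ?_
  have hbezout : A = qPoly N * (qPoly u * A) + qPoly v * (qPoly f * A) := by
    rw [← mul_assoc, ← mul_assoc, ← qPoly_mul, ← qPoly_mul, ← add_mul, ← qPoly_add, mul_comm N,
      huv, qPoly_one, one_mul]
  rw [hbezout]
  exact dvd_add (dvd_mul_right _ _) (qPoly_dvd_mul_left h _)

/-! ### Bilinear algebra modulo an irreducible real polynomial -/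

/-- The standard basis `1, i, j, k` of the real quaternions. -/
@[simps]
def quaternionUnit (i : Fin 4) : Hq :=
  ⟨if i = 0 then 1 else 0, if i = 1 then 1 else 0, if i = 2 then 1 else 0, if i = 3 then 1 else 0⟩

theorem sum_quaternionUnit_mul_mul_star (a : Hq) :
    ∑ i, quaternionUnit i * a * star (quaternionUnit i) = (2 : ℝ) • (a + star a) := by
  ext <;> simp [Fin.sum_univ_four]
  ring

theorem sum_mul_quaternionUnit_add_star_mul_star (a : Hq) :
    ∑ i, (a * quaternionUnit i + star (a * quaternionUnit i)) * star (quaternionUnit i) =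
      (2 : ℝ) • a := by
  ext <;> simp [Fin.sum_univ_four] <;> ring

theorem qPoly_dvd_of_dvd_two_smul {f : ℝ[X]} {A : Hq[X]} (h : qPoly f ∣ (2 : ℝ) • A) :
    qPoly f ∣ A := by
  obtain ⟨B, hB⟩ := h
  exact ⟨(2⁻¹ : ℝ) • B, by rw [mul_smul_comm, ← hB, inv_smul_smul₀ two_ne_zero]⟩

theorem qPoly_dvd_of_dvd_trace {f : ℝ[X]} {A : Hq[X]}
    (h : ∀ x : Hq, qPoly f ∣ A * C x + cstar (A * C x)) : qPoly f ∣ A := by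
  have hsum : ∑ i, (A * C (quaternionUnit i) + cstar (A * C (quaternionUnit i))) *
      C (star (quaternionUnit i)) = (2 : ℝ) • A := by
    ext1 n
    simpa [coeff_cstar] using sum_mul_quaternionUnit_add_star_mul_star (A.coeff n)
  exact qPoly_dvd_of_dvd_two_smul (hsum ▸ Finset.dvd_sum fun i _ => (h _).mul_right _)

theorem qPoly_dvd_trace_of_dvd_mul {N : ℝ[X]} (hN : Irreducible N) {A B : Hq[X]}
    (hA : ¬ qPoly N ∣ A) (h : qPoly N ∣ (B + cstar B) * A) : qPoly N ∣ B + cstar B := by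
  obtain ⟨t, ht⟩ := exists_add_cstar_eq_qPoly B
  rw [ht] at h ⊢
  exact qPoly_dvd_qPoly_iff.mpr (dvd_of_qPoly_dvd_qPoly_mul hN hA h)

theorem qPoly_dvd_mul_of_dvd_mul_mul_left {N : ℝ[X]} (hN : Irreducible N) {A S K : Hq[X]}
    (hS : qPoly N ∣ S * cstar S) (hK : ¬ qPoly N ∣ S * K) (h : qPoly N ∣ A * (S * K)) :
    qPoly N ∣ A * S := by
  by_contra hAS
  refine hK (qPoly_dvd_of_dvd_trace fun x => ?_)
  rw [mul_assoc, mul_add_cstar_mul_comm S (K * C x)]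
  refine qPoly_dvd_trace_of_dvd_mul hN hAS ?_
  rw [(commute_add_cstar _ _).eq]
  have hexpand : A * S * (K * C x * S + cstar (K * C x * S)) =
      A * (S * K) * (C x * S) + A * (S * cstar S * cstar (K * C x)) := by
    rw [cstar_mul (K * C x)]; simp only [mul_add, mul_assoc]
  rw [hexpand]
  exact dvd_add (h.mul_right _) (qPoly_dvd_mul_left (hS.mul_right _) _)

theorem qPoly_dvd_mul_of_dvd_mul_mul_right {N : ℝ[X]} (hN : Irreducible N) {A S K : Hq[X]}
    (hS : qPoly N ∣ S * cstar S) (hK : ¬ qPoly N ∣ K * S) (h : qPoly N ∣ K * S * A) :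
    qPoly N ∣ S * A := by
  rw [← qPoly_dvd_cstar_iff, cstar_mul] at hK h ⊢
  rw [cstar_mul] at h
  exact qPoly_dvd_mul_of_dvd_mul_mul_left hN (by rwa [cstar_cstar, cstar_mul_self]) hK h

theorem exists_star_eq_neg_not_dvd_conj {N : ℝ[X]} (hN : Irreducible N) {Q : Hq[X]}
    (hQ : ¬ qPoly N ∣ Q) (hnorm : qPoly N ∣ Q * cstar Q) :
    ∃ y : Hq, star y = -y ∧ ¬ qPoly N ∣ cstar Q * C y * Q := by
  by_contra! hpure
  have hall (x : Hq) : qPoly N ∣ cstar Q * C x * Q := by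
    have hsplit : cstar Q * C x * Q =
        Q * cstar Q * qPoly (C x.re) + cstar Q * C x.im * Q := by
      rw [← (commute_qPoly _ _).eq, ← cstar_mul_self, ← mul_assoc, (commute_qPoly _ _).eq,
        ← add_mul, ← mul_add, qPoly, map_C, ← C_add]
      congr; exact (Quaternion.re_add_im x).symm
    rw [hsplit]
    exact dvd_add (hnorm.mul_right _) (hpure _ (Quaternion.star_im x))
  refine hQ (qPoly_dvd_cstar_iff.mp (qPoly_dvd_of_dvd_trace fun x => ?_))
  have hsum : ∑ i, C (quaternionUnit i) * (cstar Q * C (x * star (quaternionUnit i)) * Q) =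
      (2 : ℝ) • ((cstar Q * C x + cstar (cstar Q * C x)) * Q) := by
    have hcoeff : ∑ i, C (quaternionUnit i) * (cstar Q * C x) * C (star (quaternionUnit i)) =
        (2 : ℝ) • (cstar Q * C x + cstar (cstar Q * C x)) := by
      ext1 n
      simpa [coeff_cstar] using sum_quaternionUnit_mul_mul_star ((cstar Q * C x).coeff n)
    rw [← smul_mul_assoc, ← hcoeff, Finset.sum_mul]
    simp only [C_mul, mul_assoc]
  exact qPoly_dvd_trace_of_dvd_mul hN hQ <| qPoly_dvd_of_dvd_two_smul <|
    hsum ▸ Finset.dvd_sum fun i _ => qPoly_dvd_mul_left (hall _) _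

/-! ### Norms of left greatest common divisors -/

theorem mul_cstar_eq_of_left_gcd {f : ℝ[X]} (hf : f.Monic) {D L U V : Hq[X]} (hL : L.Monic)
    (hcomb : L = D * U + qPoly f * V) (hLD : L ∣ D) (hLf : L ∣ qPoly f)
    (hDD : qPoly f ∣ D * cstar D)
    (hD : ∀ r : ℝ[X], r.Monic → r ∣ f → qPoly r ∣ D → r = 1) : L * cstar L = qPoly f := by
  have hdvd : qPoly f ∣ L * cstar L := by
    have hDL : qPoly f ∣ D * U * cstar L := by
      have hexpand : D * U * cstar L =
          D * cstar D * (U * cstar U) + D * U * cstar (qPoly f * V) := by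
        rw [hcomb, cstar_add, cstar_mul D, mul_assoc D (cstar D), ← (commute_mul_cstar U _).eq]
        simp only [mul_add, mul_assoc]
      rw [hexpand]
      exact dvd_add (hDD.mul_right _)
        (qPoly_dvd_mul_left (qPoly_dvd_cstar_iff.mpr (dvd_mul_right _ _)) _)
    nth_rw 1 [hcomb]
    rw [add_mul]
    exact dvd_add hDL ((dvd_mul_right _ _).mul_right _)
  obtain ⟨l, hl⟩ := exists_mul_cstar_eq_qPoly L
  obtain ⟨r, rfl⟩ := qPoly_dvd_qPoly_iff.mp (hl ▸ hdvd)
  obtain ⟨W, hW⟩ := hLf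
  have hrL : qPoly r ∣ L := by
    refine qPoly_dvd_cstar_iff.mp ⟨W, mul_left_cancel₀ (qPoly_ne_zero hf.ne_zero) ?_⟩
    rw [← mul_assoc, ← qPoly_mul, ← hl, ← cstar_mul_self, mul_assoc, ← hW, (commute_qPoly _ _).eq]
  have hfr : (qPoly (f * r)).Monic := hl ▸ hL.mul (monic_cstar hL)
  have hr : r.Monic :=
    hf.of_mul_monic_left (monic_of_injective (algebraMap ℝ Hq).injective hfr)
  have hrf : r ∣ f := qPoly_dvd_qPoly_iff.mp (hW ▸ hrL.mul_right W)
  rw [hl, hD r hr hrf (hrL.trans hLD), mul_one]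

theorem coeff_one_modByMonic_qPoly_ne_zero {N : ℝ[X]} (hN : N.Monic) (hdeg : N.natDegree = 2)
    {Y : Hq[X]} (hY : ¬ qPoly N ∣ Y) (hnorm : qPoly N ∣ cstar Y * Y) :
    (Y %ₘ qPoly N).coeff 1 ≠ 0 := by
  intro hcoeff
  have hN1 : qPoly N ≠ 1 := fun h => by simpa [h] using (natDegree_qPoly N).trans hdeg
  have hlt := natDegree_modByMonic_lt Y (monic_qPoly hN) hN1
  rw [natDegree_qPoly, hdeg] at hlt
  have hrem := eq_X_add_C_of_natDegree_le_one (p := Y %ₘ qPoly N) (by omega)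
  rw [hcoeff, C_0, zero_mul, zero_add] at hrem
  have hdvd := dvd_cstar_mul_self_modByMonic (commute_qPoly N) (cstar_qPoly N) hnorm
  rw [hrem, cstar_C, ← C_mul] at hdvd
  have hzero : (Y %ₘ qPoly N).coeff 0 = 0 := by
    by_contra h0
    exact (monic_qPoly hN).not_dvd_of_natDegree_lt (C_ne_zero.mpr (by simpa using h0))
      (by rw [natDegree_C, natDegree_qPoly, hdeg]; exact two_pos) hdvd
  refine hY ⟨Y /ₘ qPoly N, ?_⟩
  rw [hzero, C_0] at hrem
  simpa [hrem] using (modByMonic_add_div Y (qPoly N)).symm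

/-! ### Dual quaternion polynomials -/

theorem fst_star (x : DHq) : (star x).fst = star x.fst :=
  add_zero _

theorem snd_star (x : DHq) : (star x).snd = star x.snd :=
  zero_add _

noncomputable instance : StarRing DHq where
  star_involutive x := by ext1 <;> simp [fst_star, snd_star]
  star_mul x y := by ext1 <;> simp [fst_star, snd_star, add_comm]
  star_add x y := by ext1 <;> simp [fst_star, snd_star]

theorem primal_mul (A B : DHq[X]) : primal (A * B) = primal A * primal B := Polynomial.map_mul _

theorem primal_one : primal 1 = 1 := Polynomial.map_one _

theorem monic_primal {A : DHq[X]} (hA : A.Monic) : (primal A).Monic := hA.map _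

theorem primal_dhQ (A : Hq[X]) : primal (dhQ A) = A := by
  ext1 n; simp [primal, dhQ]

theorem primal_dPoly (f : ℝ[X]) : primal (dPoly f) = qPoly f := primal_dhQ _

theorem primal_cstar (A : DHq[X]) : primal (cstar A) = cstar (primal A) :=
  (cstar_map fst_star A).symm

theorem dhQ_mul (A B : Hq[X]) : dhQ (A * B) = dhQ A * dhQ B := Polynomial.map_mul _

theorem dhQ_cstar (A : Hq[X]) : dhQ (cstar A) = cstar (dhQ A) :=
  (cstar_map (fun a => by ext1 <;> simp [fst_star, snd_star]) A).symm

theorem dPoly_mul (f g : ℝ[X]) : dPoly (f * g) = dPoly f * dPoly g := by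
  rw [dPoly, qPoly_mul, dhQ_mul]; rfl

theorem cstar_dPoly (f : ℝ[X]) : cstar (dPoly f) = dPoly f := by
  rw [dPoly, ← dhQ_cstar, cstar_qPoly]

theorem monic_dPoly {f : ℝ[X]} (hf : f.Monic) : (dPoly f).Monic := (monic_qPoly hf).map _

theorem natDegree_dPoly (f : ℝ[X]) : (dPoly f).natDegree = f.natDegree :=
  (natDegree_map_eq_of_injective inl_injective _).trans (natDegree_qPoly f)

theorem commute_dPoly (f : ℝ[X]) (A : DHq[X]) : Commute (dPoly f) A := by
  rw [dPoly, dhQ, qPoly, map_map]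
  refine commute_map_of_commute (fun a b => ?_) f A
  ext1 <;> simpa using Quaternion.coe_commutes a _

theorem coeff_mp (A B : Hq[X]) (n : ℕ) : (mp A B).coeff n = inl (A.coeff n) + inr (B.coeff n) := by
  ext1 <;> simp [mp, dhQ]

theorem primal_mp (A B : Hq[X]) : primal (mp A B) = A := by
  ext1 n; simp [primal, coeff_mp]

theorem dhQ_eq_mp (A : Hq[X]) : dhQ A = mp A 0 := by
  simp [mp, dhQ]

theorem mp_mul (A B A' B' : Hq[X]) : mp A B * mp A' B' = mp (A * A') (A * B' + B * A') := by
  ext1 n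
  simp only [coeff_mul, coeff_mp, coeff_add]
  ext1 <;> simp [Finset.sum_add_distrib, add_comm, fst_sum, snd_sum]

theorem exists_eq_mp (A : DHq[X]) : ∃ D, A = mp (primal A) D := by
  induction A using Polynomial.induction_on' with
  | add A B hA hB =>
    obtain ⟨D, hD⟩ := hA
    obtain ⟨E, hE⟩ := hB
    exact ⟨D + E, by rw [hD, hE]; ext1 n; ext1 <;> simp [primal, coeff_mp]⟩
  | monomial n a =>
    refine ⟨monomial n a.snd, ?_⟩
    ext1 m
    ext1 <;> simp [primal, coeff_mp, coeff_monomial] <;> split_ifs <;> simp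

/-! ### Motion polynomials of primary norm -/

theorem IsMotion.mul {A B : DHq[X]} (hA : IsMotion A) (hB : IsMotion B) : IsMotion (A * B) := by
  obtain ⟨f, hf, hAf⟩ := hA
  obtain ⟨g, hg, hBg⟩ := hB
  refine ⟨f * g, mul_ne_zero hf hg, ?_⟩
  rw [cstar_mul, mul_assoc, ← mul_assoc B, hBg, (commute_dPoly g _).eq, ← mul_assoc, hAf, dPoly_mul]

/-- A monic motion polynomial with norm polynomial `N ^ n` whose primal part is not divisible by
`N`; for irreducible `N` these are the generic motion polynomials of norm `N ^ n`. -/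
structure IsPrimaryMotion (N : ℝ[X]) (n : ℕ) (M : DHq[X]) : Prop where
  monic : M.Monic
  norm : M * cstar M = dPoly (N ^ n)
  not_dvd : ¬ qPoly N ∣ primal M

namespace IsPrimaryMotion

variable {N : ℝ[X]} {n a b : ℕ} {M A B : DHq[X]}

theorem primal_norm (hM : IsPrimaryMotion N n M) :
    primal M * cstar (primal M) = qPoly (N ^ n) := by
  rw [← primal_cstar, ← primal_mul, hM.norm, primal_dPoly]

theorem genericD (hM : IsPrimaryMotion N n M) (hN : Irreducible N) : GenericD M := by
  refine ⟨hM.monic, ⟨N ^ n, pow_ne_zero n hN.ne_zero, hM.norm⟩, fun f hf hdvd => ?_⟩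
  have hfN : f ∣ N ^ n := qPoly_dvd_qPoly_iff.mp (hM.primal_norm ▸ Dvd.dvd.mul_right hdvd _)
  exact eq_one_of_dvd_pow_of_not_dvd hN hf hfN fun h =>
    hM.not_dvd ((qPoly_dvd_qPoly_iff.mpr h).trans hdvd)

protected theorem cstar (hM : IsPrimaryMotion N n M) : IsPrimaryMotion N n (cstar M) where
  monic := monic_cstar hM.monic
  norm := by
    rw [cstar_cstar, cstar_mul_self_of_mul_cstar hM.monic (commute_dPoly _ _) hM.norm]
  not_dvd := by rw [primal_cstar, qPoly_dvd_cstar_iff]; exact hM.not_dvd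

theorem two_mul_natDegree (hM : IsPrimaryMotion N n M) : 2 * M.natDegree = n * N.natDegree := by
  have h := congrArg natDegree hM.norm
  rwa [hM.monic.natDegree_mul (monic_cstar hM.monic), natDegree_cstar, ← two_mul, natDegree_dPoly,
    natDegree_pow] at h

theorem natDegree_primal (hM : IsPrimaryMotion N 1 M) (hdeg : N.natDegree = 2) :
    (primal M).natDegree = 1 := by
  have h := hM.two_mul_natDegree
  rw [primal, hM.monic.natDegree_map]
  omega

theorem eq_one (hM : IsPrimaryMotion N 0 M) : M = 1 :=
  hM.monic.natDegree_eq_zero.mp (by simpa using hM.two_mul_natDegree)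

protected theorem one (hN : Irreducible N) : IsPrimaryMotion N 0 1 where
  monic := monic_one
  norm := by rw [cstar_one, mul_one, pow_zero, dPoly, qPoly_one]; exact (Polynomial.map_one _).symm
  not_dvd := by
    rw [primal_one, ← qPoly_one, qPoly_dvd_qPoly_iff]
    exact fun h => hN.not_isUnit (isUnit_of_dvd_one h)

protected theorem mul (hA : IsPrimaryMotion N a A) (hB : IsPrimaryMotion N b B)
    (hAB : ¬ qPoly N ∣ primal (A * B)) : IsPrimaryMotion N (a + b) (A * B) where
  monic := hA.monic.mul hB.monic
  norm := by
    rw [cstar_mul, mul_assoc, ← mul_assoc B, hB.norm, (commute_dPoly _ _).eq, ← mul_assoc,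
      hA.norm, pow_add, dPoly_mul]
  not_dvd := hAB

theorem right_factor (hA : A.Monic) (hnorm : A * cstar A = dPoly (N ^ a))
    (hAB : IsPrimaryMotion N (a + b) (A * B)) : IsPrimaryMotion N b B where
  monic := hA.of_mul_monic_left hAB.monic
  norm := mul_cstar_of_mul_mul_cstar hA (commute_dPoly _ _) <| by
    rw [hAB.norm, hnorm, pow_add, dPoly_mul]
  not_dvd h := hAB.not_dvd <| primal_mul A B ▸ qPoly_dvd_mul_left h _

theorem exists_eq_mul_left (hN : N.Monic) (hdeg : N.natDegree = 2)
    (hM : IsPrimaryMotion N (n + 1) M) :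
    ∃ S Z, M = S * Z ∧ IsPrimaryMotion N 1 S ∧ IsPrimaryMotion N n Z := by
  have hnorm : cstar M * M = dPoly N * dPoly (N ^ n) := by
    rw [← dPoly_mul, ← pow_succ',
      cstar_mul_self_of_mul_cstar hM.monic (commute_dPoly _ _) hM.norm]
  have hunit : IsUnit ((M %ₘ dPoly N).coeff 1) := by
    have hprimal : ((M %ₘ dPoly N).coeff 1).fst = (primal M %ₘ qPoly N).coeff 1 := by
      rw [← primal_dPoly, primal, primal, ← map_modByMonic _ (monic_dPoly hN), coeff_map]; rfl
    rw [isUnit_iff_isUnit_fst, hprimal, isUnit_iff_ne_zero]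
    refine coeff_one_modByMonic_qPoly_ne_zero hN hdeg hM.not_dvd ?_
    rw [cstar_mul_self, hM.primal_norm, qPoly_dvd_qPoly_iff]
    exact dvd_pow_self N n.succ_ne_zero
  obtain ⟨h, Z, rfl, hS⟩ := exists_eq_X_sub_C_mul (monic_dPoly hN)
    (natDegree_dPoly N ▸ hdeg) (commute_dPoly N) (cstar_dPoly N) hunit ⟨_, hnorm⟩
  rw [← pow_one N] at hS
  rw [add_comm] at hM
  exact ⟨X - C h, Z, rfl,
    ⟨monic_X_sub_C h, hS, fun hd => hM.not_dvd (primal_mul _ Z ▸ hd.mul_right _)⟩,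
    hM.right_factor (monic_X_sub_C h) hS⟩

theorem exists_eq_mul_right (hN : N.Monic) (hdeg : N.natDegree = 2)
    (hM : IsPrimaryMotion N (n + 1) M) :
    ∃ Z S, M = Z * S ∧ IsPrimaryMotion N n Z ∧ IsPrimaryMotion N 1 S := by
  obtain ⟨S, Z, hSZ, hS, hZ⟩ := hM.cstar.exists_eq_mul_left hN hdeg
  exact ⟨cstar Z, cstar S, by rw [← cstar_mul, ← hSZ, cstar_cstar], hZ.cstar, hS.cstar⟩

theorem primal_mul_primal_eq {U V : DHq[X]} (hN : N.Monic) (hirr : Irreducible N)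
    (hdeg : N.natDegree = 2) (hU : IsPrimaryMotion N 1 U) (hV : IsPrimaryMotion N 1 V)
    (hAU : ¬ qPoly N ∣ primal A * primal U) (hVB : ¬ qPoly N ∣ primal V * primal B)
    (hdvd : qPoly N ∣ primal A * primal U * (primal V * primal B)) :
    primal U * primal V = qPoly N := by
  have hUN : qPoly N ∣ primal U * cstar (primal U) := by rw [hU.primal_norm, pow_one]
  have hVN : qPoly N ∣ primal V * cstar (primal V) := by rw [hV.primal_norm, pow_one]
  have hUm := monic_primal hU.monic
  have hVm := monic_primal hV.monic
  refine eq_of_monic_of_dvd_of_natDegree_le (monic_qPoly hN) (hUm.mul hVm) ?_ ?_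
  · exact qPoly_dvd_mul_of_dvd_mul_mul_right hirr hUN hAU
      (qPoly_dvd_mul_of_dvd_mul_mul_left hirr hVN hVB hdvd)
  · rw [hUm.natDegree_mul hVm, hU.natDegree_primal hdeg, hV.natDegree_primal hdeg,
      natDegree_qPoly, hdeg]

/- The last linear factor of `L` and the first one of `Y` have conjugate primal parts; splitting
them off lowers `k` by one. -/
theorem exists_middle_factors (hN : N.Monic) (hirr : Irreducible N) (hdeg : N.natDegree = 2)
    {k : ℕ} {L Y : DHq[X]} (hL : IsPrimaryMotion N a L) (hY : IsPrimaryMotion N b Y)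
    (hdvd : qPoly (N ^ k) ∣ primal L * primal Y) :
    ∃ A F G B, L = A * F ∧ Y = G * B ∧ GenericD A ∧ IsPrimaryMotion N k F ∧
      IsPrimaryMotion N k G ∧ GenericD B ∧ primal F * primal G = qPoly (N ^ k) := by
  induction k generalizing a b L Y with
  | zero =>
    exact ⟨L, 1, 1, Y, (mul_one L).symm, (one_mul Y).symm, hL.genericD hirr, .one hirr, .one hirr,
      hY.genericD hirr, by rw [primal_one, pow_zero, qPoly_one, mul_one]⟩
  | succ k ih =>
    have hNdvd : qPoly N ∣ primal L * primal Y :=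
      (qPoly_dvd_qPoly_iff.mpr (dvd_pow_self N k.succ_ne_zero)).trans hdvd
    obtain _ | a := a
    · exact absurd (by simpa [hL.eq_one, primal_one] using hNdvd) hY.not_dvd
    obtain _ | b := b
    · exact absurd (by simpa [hY.eq_one, primal_one] using hNdvd) hL.not_dvd
    obtain ⟨L', U, rfl, hL', hU⟩ := hL.exists_eq_mul_right hN hdeg
    obtain ⟨V, Y', rfl, hV, hY'⟩ := hY.exists_eq_mul_left hN hdeg
    have hLn := hL.not_dvd
    have hYn := hY.not_dvd
    rw [primal_mul] at hLn hYn
    rw [primal_mul, primal_mul] at hdvd hNdvd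
    have hUV : primal U * primal V = qPoly N :=
      primal_mul_primal_eq hN hirr hdeg hU hV hLn hYn hNdvd
    have hmiddle (S T : Hq[X]) :
        S * primal U * (primal V * T) = qPoly N * (S * T) := by
      rw [mul_assoc, ← mul_assoc (primal U), hUV, ← mul_assoc, ← (commute_qPoly N S).eq, mul_assoc]
    rw [hmiddle, pow_succ', qPoly_mul_dvd_qPoly_mul_iff hN.ne_zero] at hdvd
    obtain ⟨A, F, G, B, rfl, rfl, hA, hF, hG, hB, hFG⟩ := ih hL' hY' hdvd
    rw [primal_mul] at hLn hYn
    refine ⟨A, F * U, V * G, B, mul_assoc A F U, (mul_assoc V G B).symm, hA, hF.mul hU ?_,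
      add_comm 1 k ▸ hV.mul hG ?_, hB, ?_⟩
    · exact fun h => hLn (by rw [mul_assoc, ← primal_mul F]; exact qPoly_dvd_mul_left h _)
    · exact fun h => hYn (by rw [← mul_assoc, ← primal_mul V]; exact h.mul_right _)
    · rw [primal_mul, primal_mul, hmiddle, hFG, pow_succ', qPoly_mul]

end IsPrimaryMotion

/-! ### Splitting off a greatest common divisor -/

theorem exists_left_factor {c g : ℝ[X]} (hc : c.Monic) (hg : g.Monic) {Q D : Hq[X]}
    (hD : ∀ r : ℝ[X], r.Monic → r ∣ c * g → qPoly r ∣ D → r = 1)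
    (hDD : qPoly (c * g) ∣ D * cstar D) (hQD : qPoly g ∣ cstar Q * D) :
    ∃ L K E : Hq[X], L.Monic ∧ L * cstar L = qPoly (c * g) ∧ qPoly c * Q = L * K ∧ D = L * E ∧
      cstar Q * L = qPoly g * cstar K := by
  obtain ⟨L, U, V, hL, hcomb, ⟨E, hE⟩, hLcg⟩ :=
    exists_monic_left_gcd D (qPoly (c * g)) (monic_qPoly (hc.mul hg))
  have hnorm : L * cstar L = qPoly (c * g) :=
    mul_cstar_eq_of_left_gcd (hc.mul hg) hL hcomb ⟨E, hE⟩ hLcg hDD hD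
  obtain ⟨K, hK⟩ : qPoly g ∣ cstar L * Q := by
    have hexpand : cstar L * Q =
        cstar U * cstar (cstar Q * D) + cstar V * (qPoly g * (qPoly c * Q)) := by
      rw [hcomb, cstar_add, cstar_mul, cstar_mul, cstar_mul, cstar_cstar, cstar_qPoly, add_mul,
        mul_comm c, qPoly_mul]
      simp only [mul_assoc]
    rw [hexpand]
    exact dvd_add (qPoly_dvd_mul_left (qPoly_dvd_cstar_iff.mpr hQD) _)
      (qPoly_dvd_mul_left (dvd_mul_right _ _) _)
  refine ⟨L, K, E, hL, hnorm, mul_left_cancel₀ (qPoly_ne_zero hg.ne_zero) ?_, hE, ?_⟩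
  · rw [← mul_assoc _ L, (commute_qPoly g L).eq, mul_assoc L, ← hK, ← mul_assoc L, hnorm,
      mul_comm c, qPoly_mul, mul_assoc]
  · rw [← cstar_cstar L, ← cstar_mul, hK, cstar_mul, cstar_qPoly, (commute_qPoly g _).eq]

/-- A factorization `M = M_L * (G₁ * G₂) * M_R` into generic motion polynomials in which the
middle factor `M_C = G₁ * G₂` has primal part `c`, so that it describes a translational motion. -/
def HasGenericSplitting (c : ℝ[X]) (M : DHq[X]) : Prop :=
  ∃ ML G₁ G₂ MR : DHq[X], M = ML * (G₁ * G₂) * MR ∧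
    GenericD ML ∧ GenericD G₁ ∧ GenericD G₂ ∧ GenericD MR ∧ primal (G₁ * G₂) = qPoly c

theorem hasGenericSplitting_of_dvd_of_not_dvd {N : ℝ[X]} {k j m : ℕ} {Q D : Hq[X]} (hN : N.Monic)
    (hirr : Irreducible N) (hdeg : N.natDegree = 2) (hM : (mp (qPoly (N ^ k) * Q) D).Monic)
    (hnorm : mp (qPoly (N ^ k) * Q) D * cstar (mp (qPoly (N ^ k) * Q) D) =
      dPoly (N ^ (2 * k + m)))
    (hjk : j ≤ k) (hD : ¬ qPoly N ∣ D) (hDD : qPoly (N ^ k * N ^ j) ∣ D * cstar D)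
    (hQD : qPoly (N ^ j) ∣ cstar Q * D) (hQD' : ¬ qPoly (N ^ (j + 1)) ∣ cstar Q * D) :
    HasGenericSplitting (N ^ k) (mp (qPoly (N ^ k) * Q) D) := by
  obtain ⟨L, K, E, hL, hLnorm, hLK, rfl, hQL⟩ := exists_left_factor (hN.pow k) (hN.pow j)
    (fun r hr hrN hrD => eq_one_of_dvd_pow_of_not_dvd hirr hr (pow_add N k j ▸ hrN) fun h =>
      hD ((qPoly_dvd_qPoly_iff.mpr h).trans hrD)) hDD hQD
  have hsplit : mp (qPoly (N ^ k) * Q) (L * E) = dhQ L * mp K E := by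
    rw [dhQ_eq_mp, mp_mul, hLK, zero_mul, add_zero]
  have hleft : IsPrimaryMotion N (k + j) (dhQ L) :=
    { monic := hL.map _
      norm := by rw [← dhQ_cstar, ← dhQ_mul, hLnorm, ← pow_add]; rfl
      not_dvd := by rw [primal_dhQ]; exact fun h => hD (h.mul_right E) }
  rw [hsplit] at hM hnorm ⊢
  have hright : IsPrimaryMotion N (k - j + m) (mp K E) :=
    { monic := hleft.monic.of_mul_monic_left hM
      norm := mul_cstar_of_mul_mul_cstar hleft.monic (commute_dPoly _ _) <| by
        rw [hnorm, hleft.norm, ← dPoly_mul, ← pow_add]; congr 2; omega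
      not_dvd := fun h => hQD' <| by
        rw [primal_mp] at h
        rw [← mul_assoc, hQL, mul_assoc, pow_succ, qPoly_mul_dvd_qPoly_mul_iff (hN.pow j).ne_zero]
        exact (qPoly_dvd_cstar_iff.mpr h).mul_right E }
  obtain ⟨A, F, G, B, hAF, hGB, hA, hF, hG, hB, hFG⟩ :=
    hleft.exists_middle_factors hN hirr hdeg (k := k) hright <| by
      rw [primal_dhQ, primal_mp, ← hLK]; exact dvd_mul_right _ _
  exact ⟨A, F, G, B, by rw [hAF, hGB]; simp only [mul_assoc], hA, hF.genericD hirr,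
    hG.genericD hirr, hB, by rw [primal_mul, hFG]⟩

/-! ### Conjugation by translations -/

/-- Conjugation of dual quaternions by the translation `1 + εy`, the map
`x ↦ (1 + εy) x (1 - εy)`. -/
noncomputable def translationConj (y : Hq) : DHq →+* DHq where
  toFun x := x + inr (y * x.fst - x.fst * y)
  map_one' := by simp
  map_mul' a b := by
    ext1
    · simp
    · simp only [fst_mul, fst_add, fst_inr, TrivSqZeroExt.snd_mul, snd_add, snd_inr, smul_eq_mul,
        MulOpposite.smul_eq_mul_unop, MulOpposite.unop_op, add_zero]
      noncomm_ring
  map_zero' := by simp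
  map_add' a b := by
    ext1
    · simp
    · simp only [fst_add, snd_add, snd_inr]
      noncomm_ring

section TranslationConj

variable (y : Hq)

theorem fst_translationConj (x : DHq) : (translationConj y x).fst = x.fst := by
  simp [translationConj]

theorem snd_translationConj (x : DHq) :
    (translationConj y x).snd = x.snd + (y * x.fst - x.fst * y) := by
  simp [translationConj]

theorem map_translationConj_neg (A : DHq[X]) :
    (A.map (translationConj y)).map (translationConj (-y)) = A := by
  ext1 n
  ext1
  · simp only [coeff_map, fst_translationConj]
  · simp only [coeff_map, fst_translationConj, snd_translationConj]
    noncomm_ring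

theorem cstar_map_translationConj {y : Hq} (hy : star y = -y) (A : DHq[X]) :
    cstar (A.map (translationConj y)) = (cstar A).map (translationConj y) :=
  cstar_map (fun x => by
    ext1
    · simp [fst_translationConj, fst_star]
    · simp only [snd_translationConj, fst_star, snd_star, star_add, star_sub, star_mul, hy]
      noncomm_ring) A

theorem primal_map_translationConj (A : DHq[X]) :
    primal (A.map (translationConj y)) = primal A := by
  ext1 n; simp [primal, fst_translationConj]

theorem map_translationConj_mp (A B : Hq[X]) :
    (mp A B).map (translationConj y) = mp A (B + (C y * A - A * C y)) := by
  ext1 n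
  ext1 <;> simp [coeff_mp, fst_translationConj, snd_translationConj, add_comm]

theorem map_translationConj_dPoly (f : ℝ[X]) :
    (dPoly f).map (translationConj y) = dPoly f := by
  rw [dPoly, dhQ_eq_mp, map_translationConj_mp, (commute_qPoly f (C y)).eq, sub_self, add_zero]

variable {y}

theorem norm_map_translationConj (hy : star y = -y) {A : DHq[X]} {f : ℝ[X]}
    (hA : A * cstar A = dPoly f) :
    A.map (translationConj y) * cstar (A.map (translationConj y)) = dPoly f := by
  rw [cstar_map_translationConj hy, ← Polynomial.map_mul, hA, map_translationConj_dPoly]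

theorem GenericD.map_translationConj (hy : star y = -y) {A : DHq[X]} (hA : GenericD A) :
    GenericD (A.map (translationConj y)) := by
  obtain ⟨hmonic, ⟨f, hf, hnorm⟩, hred⟩ := hA
  exact ⟨hmonic.map _, ⟨f, hf, norm_map_translationConj hy hnorm⟩,
    (primal_map_translationConj y A).symm ▸ hred⟩

theorem HasGenericSplitting.map_translationConj (hy : star y = -y) {c : ℝ[X]} {M : DHq[X]}
    (hM : HasGenericSplitting c M) : HasGenericSplitting c (M.map (translationConj y)) := by
  obtain ⟨ML, G₁, G₂, MR, rfl, hL, h₁, h₂, hR, hc⟩ := hM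
  refine ⟨_, _, _, _, ?_, hL.map_translationConj hy, h₁.map_translationConj hy,
    h₂.map_translationConj hy, hR.map_translationConj hy, ?_⟩
  · simp only [Polynomial.map_mul]
  · rw [← Polynomial.map_mul, primal_map_translationConj, hc]

end TranslationConj

theorem map_translationConj_mp_qPoly_mul (y : Hq) (c : ℝ[X]) (Q D : Hq[X]) :
    (mp (qPoly c * Q) D).map (translationConj y) =
      mp (qPoly c * Q) (D + qPoly c * (C y * Q - Q * C y)) := by
  rw [map_translationConj_mp, ← mul_assoc, ← (commute_qPoly c _).eq, mul_sub, mul_assoc, mul_assoc]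

theorem qPoly_mul_self_dvd_norm_add {y : Hq} (hy : star y = -y) {c : ℝ[X]} {Q D : Hq[X]}
    (hDD : qPoly (c * c) ∣ D * cstar D) (hQD : qPoly c ∣ cstar Q * D)
    (hDQ : qPoly c ∣ D * cstar Q) :
    qPoly (c * c) ∣ (D + qPoly c * (C y * Q - Q * C y)) *
      cstar (D + qPoly c * (C y * Q - Q * C y)) := by
  have htrace {A : Hq[X]} (hA : qPoly c ∣ A) : qPoly c ∣ A + cstar A :=
    dvd_add hA (qPoly_dvd_cstar_iff.mpr hA)
  set W := C y * Q - Q * C y with hW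
  have hDW : qPoly c ∣ D * cstar W + cstar (D * cstar W) := by
    have hstar : D * cstar W = D * (C y * cstar Q) - D * cstar Q * C y := by
      rw [hW, cstar_sub, cstar_mul, cstar_mul, cstar_C, hy, C_neg]; noncomm_ring
    have hcomm : D * cstar W + cstar (D * cstar W) =
        (cstar Q * D * C y + cstar (cstar Q * D * C y)) -
          (D * cstar Q * C y + cstar (D * cstar Q * C y)) := by
      rw [mul_assoc (cstar Q), mul_add_cstar_mul_comm (cstar Q), hstar, cstar_sub,
        mul_assoc D (C y)]
      abel
    rw [hcomm]
    exact dvd_sub (htrace (hQD.mul_right _)) (htrace (hDQ.mul_right _))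
  have hexpand : (D + qPoly c * W) * cstar (D + qPoly c * W) = D * cstar D +
      qPoly c * (D * cstar W + cstar (D * cstar W)) + qPoly (c * c) * (W * cstar W) := by
    have hc (A : Hq[X]) : A * qPoly c = qPoly c * A := (commute_qPoly c A).eq.symm
    simp only [cstar_add, cstar_mul, cstar_cstar, cstar_qPoly, hc, qPoly_mul, mul_add, add_mul,
      ← mul_assoc]
    abel
  rw [hexpand]
  refine dvd_add (dvd_add hDD ?_) (dvd_mul_right _ _)
  rw [qPoly_mul]
  exact mul_dvd_mul_left _ hDW

theorem hasGenericSplitting_of_pow_succ_dvd {N : ℝ[X]} {k m : ℕ} {Q D : Hq[X]} (hN : N.Monic)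
    (hirr : Irreducible N) (hdeg : N.natDegree = 2) (hM : (mp (qPoly (N ^ k) * Q) D).Monic)
    (hnorm : mp (qPoly (N ^ k) * Q) D * cstar (mp (qPoly (N ^ k) * Q) D) =
      dPoly (N ^ (2 * k + m)))
    (hk : k ≠ 0) (hQ : ¬ qPoly N ∣ Q) (hQQ : qPoly N ∣ Q * cstar Q) (hD : ¬ qPoly N ∣ D)
    (hDD : qPoly (N ^ k * N ^ k) ∣ D * cstar D) (hQD : qPoly (N ^ (k + 1)) ∣ cstar Q * D)
    (hDQ : qPoly (N ^ k) ∣ D * cstar Q) :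
    HasGenericSplitting (N ^ k) (mp (qPoly (N ^ k) * Q) D) := by
  obtain ⟨y, hy, hyQ⟩ := exists_star_eq_neg_not_dvd_conj hirr hQ hQQ
  have hNc : qPoly N ∣ qPoly (N ^ k) := qPoly_dvd_qPoly_iff.mpr (dvd_pow_self N hk)
  have hQD₀ : qPoly (N ^ k) ∣ cstar Q * D :=
    (qPoly_dvd_qPoly_iff.mpr (pow_dvd_pow N k.le_succ)).trans hQD
  have hQD' : cstar Q * (D + qPoly (N ^ k) * (C y * Q - Q * C y)) =
      cstar Q * D + qPoly (N ^ k) * (cstar Q * C y * Q - Q * cstar Q * C y) := by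
    rw [mul_add, ← mul_assoc (cstar Q) (qPoly _), ← (commute_qPoly _ _).eq, mul_assoc (qPoly _),
      mul_sub (cstar Q), ← mul_assoc, ← mul_assoc, cstar_mul_self]
  rw [← map_translationConj_neg y (mp _ _)]
  refine HasGenericSplitting.map_translationConj (by rw [star_neg, hy]) ?_
  have hM' := hM.map (translationConj y)
  have hnorm' := norm_map_translationConj hy hnorm
  rw [map_translationConj_mp_qPoly_mul] at hM' hnorm' ⊢
  refine hasGenericSplitting_of_dvd_of_not_dvd hN hirr hdeg hM' hnorm' le_rfl ?_
    (qPoly_mul_self_dvd_norm_add hy hDD hQD₀ hDQ) ?_ ?_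
  · rwa [dvd_add_left (hNc.mul_right _)]
  · rw [hQD']
    exact dvd_add hQD₀ (dvd_mul_right _ _)
  · rw [hQD', dvd_add_right hQD, pow_succ, qPoly_mul_dvd_qPoly_mul_iff (hN.pow k).ne_zero,
      dvd_sub_left (hQQ.mul_right _)]
    exact hyQ

/-! ### Existence of the splitting -/

theorem exists_norm_eq_pow {N : ℝ[X]} (hirr : Irreducible N) {n k : ℕ} {Q : Hq[X]}
    (h : qPoly (N ^ k) * Q * cstar (qPoly (N ^ k) * Q) = qPoly (N ^ n)) :
    ∃ m, n = 2 * k + m ∧ Q * cstar Q = qPoly (N ^ m) := by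
  obtain ⟨q, hq⟩ := exists_mul_cstar_eq_qPoly Q
  have hpow : N ^ n = N ^ (2 * k) * q := qPoly_injective <| by
    rw [← h, two_mul, pow_add, qPoly_mul, qPoly_mul, ← hq, cstar_mul, cstar_qPoly,
      ← (commute_qPoly _ (cstar Q)).eq, mul_assoc, ← mul_assoc Q, ← (commute_qPoly _ Q).eq]
    simp only [mul_assoc]
  obtain ⟨m, rfl⟩ := Nat.exists_eq_add_of_le
    ((pow_dvd_pow_iff hirr.ne_zero hirr.not_isUnit).mp ⟨q, hpow⟩)
  rw [pow_add] at hpow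
  exact ⟨m, rfl, by rw [hq, mul_left_cancel₀ (pow_ne_zero _ hirr.ne_zero) hpow]⟩

theorem hasGenericSplitting_of_mrpf {N c g : ℝ[X]} {n : ℕ} {Q D : Hq[X]} (hN : N.Monic)
    (hirr : Irreducible N) (hdeg : N.natDegree = 2) (hM : (mp (qPoly c * Q) D).Monic)
    (hred : ReducedD (mp (qPoly c * Q) D))
    (hnorm : mp (qPoly c * Q) D * cstar (mp (qPoly c * Q) D) = dPoly (N ^ n))
    (hc : IsMrpfQ c (qPoly c * Q)) (hcdeg : 0 < c.natDegree) (hg : IsMrpf2 g c (cstar Q * D))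
    (hDQ : qPoly g ∣ D * cstar Q) (hDD : qPoly (c * g) ∣ D * cstar D) :
    HasGenericSplitting c (mp (qPoly c * Q) D) := by
  have hpow {a b : ℕ} : N ^ a ∣ N ^ b → a ≤ b :=
    (pow_dvd_pow_iff hirr.ne_zero hirr.not_isUnit).mp
  have hP : qPoly c * Q * cstar (qPoly c * Q) = qPoly (N ^ n) := by
    rw [← primal_mp (qPoly c * Q) D, ← primal_cstar, ← primal_mul, hnorm, primal_dPoly]
  obtain ⟨k, -, rfl⟩ := eq_pow_of_monic_of_dvd_pow hN hirr hc.1 <|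
    qPoly_dvd_qPoly_iff.mp <| hP ▸ (dvd_mul_right _ Q).mul_right _
  obtain ⟨j, hjk, rfl⟩ := eq_pow_of_monic_of_dvd_pow hN hirr hg.1 hg.2.1
  obtain ⟨m, rfl, hQQ⟩ := exists_norm_eq_pow hirr hP
  have hk : k ≠ 0 := by rintro rfl; simp at hcdeg
  have hQ : ¬ qPoly N ∣ Q := fun h => k.lt_irrefl <| hpow <| hc.2.2 _ (hN.pow (k + 1)) <|
    pow_succ N k ▸ (qPoly_mul_dvd_qPoly_mul_iff (hN.pow k).ne_zero).mpr h
  have hD : ¬ qPoly N ∣ D := by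
    rintro ⟨E, rfl⟩
    obtain ⟨P, hP'⟩ := (qPoly_dvd_qPoly_iff.mpr (dvd_pow_self N hk)).mul_right Q
    refine hirr.ne_one (hred N hN ⟨mp P E, ?_⟩)
    rw [dPoly, dhQ_eq_mp, mp_mul, hP', zero_mul, add_zero]
  by_cases hlast : qPoly (N ^ (j + 1)) ∣ cstar Q * D
  · obtain rfl : j = k := by
      by_contra hne
      exact j.lt_irrefl <| hpow <| hg.2.2.2 _ (hN.pow _) (pow_dvd_pow N (by omega)) hlast
    have hm : m ≠ 0 := by
      rintro rfl
      have hNQD := (qPoly_dvd_qPoly_iff.mpr (dvd_pow_self N j.succ_ne_zero)).trans hlast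
      have h := qPoly_dvd_mul_left hNQD Q
      rw [← mul_assoc, hQQ, pow_zero, qPoly_one, one_mul] at h
      exact hD h
    exact hasGenericSplitting_of_pow_succ_dvd hN hirr hdeg hM hnorm hk hQ
      (hQQ ▸ qPoly_dvd_qPoly_iff.mpr (dvd_pow_self N hm)) hD hDD hlast hDQ
  · exact hasGenericSplitting_of_dvd_of_not_dvd hN hirr hdeg hM hnorm hjk hD hDD hg.2.2.1 hlast

/-- Correctness of Algorithm `Factor3`: the three-part factorization `M = M_L·M_C·M_R`
with generic `M_L`, `M_R` and translational `M_C` a product of two generic motion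
polynomials. -/
theorem factor3_exists
    (n : ℕ) (hn : 1 ≤ n) (P D : Hq[X]) (c : ℝ[X]) (Q : Hq[X]) (N g gR : ℝ[X])
    (M : DHq[X]) (hM : M = mp P D)
    (hmonic : M.Monic) (hmotion : IsMotion M)
    (hred : ReducedD M) (hbdd : BoundedD M)
    (hdeg : M.natDegree = n)
    (hc : IsMrpfQ c P) (hPQ : P = qPoly c * Q) (hcdeg : 0 < c.natDegree)
    (hN2 : N.natDegree = 2) (hNirr : Irreducible N)
    (hnorm : M * cstar M = dPoly (N ^ n))
    (hg : IsMrpf2 g c (cstar Q * D))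
    (hgR : IsMrpf2 gR c (D * cstar Q))
    (hgdvd : g ∣ gR)
    (hcg : RDvdQ (c * g) (D * cstar D)) :
    ∃ ML MC MR : DHq[X],
      ML.Monic ∧ MC.Monic ∧ MR.Monic ∧
      IsMotion ML ∧ IsMotion MC ∧ IsMotion MR ∧
      M = ML * MC * MR ∧ GenericD ML ∧ GenericD MR ∧
      (∃ D' : Hq[X], MC = mp (qPoly c) D') ∧
      (∃ G₁ G₂ : DHq[X], GenericD G₁ ∧ GenericD G₂ ∧ MC = G₁ * G₂) := by
  subst hM hPQ
  have hmonic_norm : (N ^ n).Monic := by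
    have h := monic_primal (hmonic.mul (monic_cstar hmonic))
    rw [hnorm, primal_dPoly] at h
    exact monic_of_injective (algebraMap ℝ Hq).injective h
  obtain ⟨N₀, hN₀, hirr, hdeg₀, hpow⟩ := exists_monic_pow_eq hNirr hmonic_norm
  have hDQ : qPoly g ∣ D * cstar Q := (qPoly_dvd_qPoly_iff.mpr hgdvd).trans hgR.2.2.1
  obtain ⟨ML, G₁, G₂, MR, heq, hL, h₁, h₂, hR, hprimal⟩ :=
    hasGenericSplitting_of_mrpf hN₀ hirr (hdeg₀.trans hN2) hmonic hred (hpow ▸ hnorm) hc hcdeg hg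
      hDQ hcg
  refine ⟨ML, G₁ * G₂, MR, hL.1, h₁.1.mul h₂.1, hR.1, hL.2.1, h₁.2.1.mul h₂.2.1, hR.2.1, heq, hL,
    hR, ?_, G₁, G₂, h₁, h₂, rfl⟩
  exact hprimal ▸ exists_eq_mp (G₁ * G₂)
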